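/- Let T > 0 and let p, q : [0,T] → ℝ be continuous. Let f₀ ∈ C^∞(ℝ; ℂ) be supported in the open interval (0,T). Let u ∈ C¹(D; ℂ²), D := {(x,t) : 0 ≤ x ≤ T, 0 ≤ t ≤ 2T−x}, satisfy i ∂u/∂t + J ∂u/∂x + V(x) u = 0 on D, u(x,t) = 0 whenever t < x, and u₁(0,t) = f₀(t) for 0 ≤ t ≤ 2T. Let v ∈ C¹([0,T]×[0,T]; ℂ²) satisfy i ∂v/∂t − J ∂v/∂x − V(x) v = 0 on [0,T]×[0,T] and v(x,t) = 0 whenever t < x. Then ∫₀^T u(x,T) · conj(v(x,T)) dx = i ∫₀^T u₂(0, 2T−η) conj(v₁(0,η)) dη. -/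

import Mathlib

/-!
The identity is Green's formula for the product of `u`, run backwards in time, with `conj v`.
With `u` evaluated at `(x, 2T - t)` and `v` at `(x, t)`, the two Dirac equations and the symmetry
of the real matrix `V` give the conservation law
`∂ₓ(u₂ v̄₁ - u₁ v̄₂) - i ∂ₜ(u₁ v̄₁ + u₂ v̄₂) = 0` (`exists_hasFDerivAt_conservation`).
The divergence theorem on the square `[0,T] × [0,T]` then equates boundary integrals.
On the sides `x = T` and `t = 0` the integrand vanishes with `v`; the side `t = T` gives the
left-hand integral; on `x = 0` only `u₂ v̄₁` remains, because `u₁(0, 2T - t) = f₀(2T - t) = 0`.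

The point `(x, 2T - t)` lies in `D` only for `x ≤ t`. For `x ≥ t` the product is zero
because `v` is. It is differentiable across the diagonal, with zero derivative, since there `v`
vanishes to first order and `u` is bounded (`hasFDerivAt_prodUV_zero`). This is what allows the
divergence theorem to be applied on the whole square rather than on a triangle.
-/


open MeasureTheory Set

noncomputable section

/-- The matrix `J = [[0,1],[-1,0]]`. -/
def Jmat : Matrix (Fin 2) (Fin 2) ℂ := !![0, 1; -1, 0]

/-- The potential matrix `V(x) = [[p x, q x],[q x, -p x]]`. -/
def Vmat (p q : ℝ → ℝ) (x : ℝ) : Matrix (Fin 2) (Fin 2) ℂ :=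
  !![(p x : ℂ), (q x : ℂ); (q x : ℂ), -(p x : ℂ)]

/-- The domain `D = {(x,t) : 0 ≤ x ≤ T, 0 ≤ t ≤ 2T - x}`. -/
def Dext (T : ℝ) : Set (ℝ × ℝ) := {z | 0 ≤ z.1 ∧ z.1 ≤ T ∧ 0 ≤ z.2 ∧ z.2 ≤ 2 * T - z.1}

/-- The square `[0,T] × [0,T]`. -/
def Sq (T : ℝ) : Set (ℝ × ℝ) := Icc (0 : ℝ) T ×ˢ Icc (0 : ℝ) T

/-- The Dirac equation `i ∂u/∂t + J ∂u/∂x + V u = 0` holding at every point of `D`. -/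
def DiracOn (p q : ℝ → ℝ) (D : Set (ℝ × ℝ)) (u : ℝ × ℝ → Fin 2 → ℂ) : Prop :=
  ∀ z ∈ D,
    Complex.I • (fderivWithin ℝ u D z ((0 : ℝ), (1 : ℝ)))
      + Jmat.mulVec (fderivWithin ℝ u D z ((1 : ℝ), (0 : ℝ)))
      + (Vmat p q z.1).mulVec (u z) = 0

/-- The dual Dirac equation `i ∂v/∂t - J ∂v/∂x - V v = 0` holding at every point of `D`. -/
def DiracDualOn (p q : ℝ → ℝ) (D : Set (ℝ × ℝ)) (v : ℝ × ℝ → Fin 2 → ℂ) : Prop :=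
  ∀ z ∈ D,
    Complex.I • (fderivWithin ℝ v D z ((0 : ℝ), (1 : ℝ)))
      - Jmat.mulVec (fderivWithin ℝ v D z ((1 : ℝ), (0 : ℝ)))
      - (Vmat p q z.1).mulVec (v z) = 0

/-- The point `(x, 2T - t)` at which `u` is evaluated when `v` is evaluated at `(x, t)`; for
`(x, t)` in the square it lies in `D` when `x ≤ t`. -/
def reflT (T : ℝ) (z : ℝ × ℝ) : ℝ × ℝ := (z.1, 2 * T - z.2)

/-- The product `u_i(x, 2T - t) conj(v_j(x, t))`, with components numbered from `0`. -/
def prodUV (T : ℝ) (u v : ℝ × ℝ → Fin 2 → ℂ) (i j : Fin 2) (z : ℝ × ℝ) : ℂ :=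
  u (reflT T z) i * (starRingEnd ℂ) (v z j)

/-- The closed region `t ≤ x`, on which `v` vanishes. -/
def lowerHalf : Set (ℝ × ℝ) := {z | z.2 ≤ z.1}

lemma hasFDerivAt_reflT (T : ℝ) (z : ℝ × ℝ) :
    HasFDerivAt (reflT T)
      ((ContinuousLinearMap.fst ℝ ℝ ℝ).prod (-ContinuousLinearMap.snd ℝ ℝ ℝ)) z := by
  unfold reflT
  exact hasFDerivAt_fst.prodMk (hasFDerivAt_snd.const_sub _)

lemma convex_lowerHalf : Convex ℝ lowerHalf := by
  intro a ha b hb s t hs ht _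
  simp only [lowerHalf, mem_ofPred_eq, Prod.snd_add, Prod.smul_snd, Prod.fst_add,
    Prod.smul_fst, smul_eq_mul] at *
  nlinarith [mul_le_mul_of_nonneg_left ha hs, mul_le_mul_of_nonneg_left hb ht]

lemma isClosed_lowerHalf : IsClosed lowerHalf := isClosed_le continuous_snd continuous_fst

lemma uniqueDiffWithinAt_lowerHalf {z : ℝ × ℝ} (hz : z ∈ lowerHalf) :
    UniqueDiffWithinAt ℝ lowerHalf z := by
  refine uniqueDiffWithinAt_convex convex_lowerHalf ⟨(1, 0), ?_⟩ (subset_closure hz)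
  have ho : IsOpen {w : ℝ × ℝ | w.2 < w.1} := isOpen_lt continuous_snd continuous_fst
  have hsub : {w : ℝ × ℝ | w.2 < w.1} ⊆ lowerHalf := fun w (hw : w.2 < w.1) => hw.le
  exact interior_maximal hsub ho (show (0 : ℝ) < 1 by norm_num)

lemma isCompact_Dext (T : ℝ) : IsCompact (Dext T) := by
  refine IsCompact.of_isClosed_subset
    ((isCompact_Icc (a := (0 : ℝ)) (b := T)).prod (isCompact_Icc (a := (0 : ℝ)) (b := 2 * T))) ?_ ?_
  · have e : Dext T = {z : ℝ × ℝ | 0 ≤ z.1} ∩ ({z | z.1 ≤ T} ∩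
        ({z | 0 ≤ z.2} ∩ {z | z.2 ≤ 2 * T - z.1})) := rfl
    rw [e]
    exact (isClosed_le (by fun_prop) (by fun_prop)).inter
      ((isClosed_le (by fun_prop) (by fun_prop)).inter
      ((isClosed_le (by fun_prop) (by fun_prop)).inter
      (isClosed_le (by fun_prop) (by fun_prop))))
  · rintro z ⟨h1, h2, h3, h4⟩
    exact ⟨⟨h1, h2⟩, ⟨h3, by linarith⟩⟩

lemma reflT_mem_Dext {T : ℝ} {z : ℝ × ℝ} (hz : z ∈ Sq T) (h : z.1 ≤ z.2) :
    reflT T z ∈ Dext T := by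
  obtain ⟨⟨h1, h2⟩, h3, h4⟩ := hz
  exact ⟨h1, h2, by simp only [reflT]; linarith, by simp only [reflT]; linarith⟩

/-- By continuity, `v` vanishes on the diagonal as well as below it. -/
lemma v_eq_zero {T : ℝ} (hT : 0 < T) {v : ℝ × ℝ → Fin 2 → ℂ} (hv : ContinuousOn v (Sq T))
    (hvt : ∀ z ∈ Sq T, z.2 < z.1 → v z = 0) {z : ℝ × ℝ} (hz : z ∈ Sq T) (h : z.2 ≤ z.1) :
    v z = 0 := by
  have hcl : z ∈ closure (Sq T ∩ {w | w.2 < w.1}) := by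
    -- the segment from `z` to the corner `(T, 0)` lies strictly below the diagonal, apart from `z`
    have hlim : Filter.Tendsto (fun s : ℝ => ((1 - s) * z.1 + s * T, (1 - s) * z.2))
        (nhdsWithin 0 (Ioi 0)) (nhds z) := by
      have : Continuous (fun s : ℝ => ((1 - s) * z.1 + s * T, (1 - s) * z.2)) := by fun_prop
      have h0 := this.tendsto 0
      simp only [sub_zero, one_mul, zero_mul, add_zero] at h0
      exact h0.mono_left nhdsWithin_le_nhds
    refine mem_closure_of_tendsto hlim ?_
    filter_upwards [Ioo_mem_nhdsGT (show (0 : ℝ) < 1 by norm_num)] with s hs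
    obtain ⟨⟨h1, h2⟩, h3, h4⟩ := hz
    obtain ⟨s0, s1⟩ := hs
    have s1' : 0 ≤ 1 - s := by linarith
    have m1 := mul_nonneg s1' h1
    have m2 := mul_le_mul_of_nonneg_left h2 s1'
    have m3 := mul_nonneg s1' h3
    have m4 := mul_le_mul_of_nonneg_left h4 s1'
    have m5 := mul_le_mul_of_nonneg_left h s1'
    have m6 := mul_pos s0 hT
    have m7 := mul_nonneg s1' hT.le
    refine ⟨⟨⟨?_, ?_⟩, ?_, ?_⟩, ?_⟩ <;> simp only [mem_ofPred_eq] <;> nlinarith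
  have hsub : Sq T ∩ {w | w.2 < w.1} ⊆ Sq T := inter_subset_left
  have hne := mem_closure_iff_nhdsWithin_neBot.1 hcl
  have t1 := (hv z hz).mono_left (nhdsWithin_mono z hsub)
  have t2 : Filter.Tendsto v (nhdsWithin z (Sq T ∩ {w | w.2 < w.1})) (nhds 0) := by
    refine tendsto_const_nhds.congr' ?_
    filter_upwards [self_mem_nhdsWithin] with w hw
    exact (hvt w hw.1 hw.2).symm
  exact tendsto_nhds_unique t1 t2

lemma continuousOn_prodUV {T : ℝ} {u v : ℝ × ℝ → Fin 2 → ℂ}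
    (hu : ContinuousOn u (Dext T)) (hv : ContinuousOn v (Sq T))
    (hv0 : ∀ z ∈ Sq T, z.2 ≤ z.1 → v z = 0) (i j : Fin 2) :
    ContinuousOn (prodUV T u v i j) (Sq T) := by
  have hcl : IsClosed (Sq T) := isClosed_Icc.prod isClosed_Icc
  have hup : ContinuousOn (prodUV T u v i j) (Sq T ∩ {z | z.1 ≤ z.2}) := by
    have h1 : ContinuousOn (fun z => u (reflT T z)) (Sq T ∩ {z | z.1 ≤ z.2}) :=
      hu.comp (by unfold reflT; fun_prop) fun z hz => reflT_mem_Dext hz.1 hz.2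
    have h2 : ContinuousOn v (Sq T ∩ {z | z.1 ≤ z.2}) := hv.mono inter_subset_left
    exact (continuousOn_pi.1 h1 i).mul
      (Complex.continuous_conj.comp_continuousOn (continuousOn_pi.1 h2 j))
  have hlow : ContinuousOn (prodUV T u v i j) (Sq T ∩ lowerHalf) :=
    (continuousOn_const (c := (0 : ℂ))).congr fun z hz => by simp [prodUV, hv0 z hz.1 hz.2]
  have e : Sq T = (Sq T ∩ {z | z.1 ≤ z.2}) ∪ (Sq T ∩ lowerHalf) := by
    ext z
    have := le_total z.1 z.2
    simp only [lowerHalf, mem_union, mem_inter_iff, mem_ofPred_eq]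
    tauto
  rw [e]
  exact hup.union_of_isClosed hlow
    (hcl.inter (isClosed_le continuous_fst continuous_snd)) (hcl.inter isClosed_lowerHalf)

/-- On and below the diagonal the product is differentiable with zero derivative: `v` vanishes
there, hence so does its derivative by one-sided uniqueness, and `u` is bounded on `D`. -/
lemma hasFDerivAt_prodUV_zero {T : ℝ} {u v : ℝ × ℝ → Fin 2 → ℂ}
    (hu : ContinuousOn u (Dext T)) (hv : DifferentiableOn ℝ v (Sq T))
    (hv0 : ∀ z ∈ Sq T, z.2 ≤ z.1 → v z = 0) (i j : Fin 2) {z : ℝ × ℝ}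
    (hz : Sq T ∈ nhds z) (h : z.2 ≤ z.1) :
    HasFDerivAt (prodUV T u v i j) (0 : ℝ × ℝ →L[ℝ] ℂ) z := by
  have hzS : z ∈ Sq T := mem_of_mem_nhds hz
  have hd := (hv.differentiableAt hz).hasFDerivAt
  have hzero : HasFDerivWithinAt v (0 : ℝ × ℝ →L[ℝ] (Fin 2 → ℂ)) lowerHalf z := by
    refine (hasFDerivWithinAt_const (0 : Fin 2 → ℂ) z lowerHalf).congr_of_eventuallyEq ?_
      (hv0 z hzS h)
    filter_upwards [self_mem_nhdsWithin, mem_nhdsWithin_of_mem_nhds hz] with w hw hwS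
    exact hv0 w hwS hw
  rw [(uniqueDiffWithinAt_lowerHalf h).eq hd.hasFDerivWithinAt hzero] at hd
  have ho := hasFDerivAt_iff_isLittleO.1 hd
  rw [hasFDerivAt_iff_isLittleO]
  obtain ⟨C, hC⟩ := (isCompact_Dext T).exists_bound_of_continuousOn hu
  refine Asymptotics.IsBigO.trans_isLittleO ?_ ho
  refine Asymptotics.IsBigO.of_bound C ?_
  filter_upwards [hz] with w hw
  simp only [prodUV, hv0 z hzS h, Pi.zero_apply, map_zero, mul_zero, sub_zero,
    _root_.zero_apply, norm_mul, RCLike.norm_conj]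
  rcases le_total w.1 w.2 with hle | hle
  · have hm := hC _ (reflT_mem_Dext hw hle)
    exact mul_le_mul ((norm_le_pi_norm _ i).trans hm) (norm_le_pi_norm _ j) (norm_nonneg _)
      ((norm_nonneg _).trans hm)
  · simp [hv0 w hw hle]

lemma hasFDerivAt_prodUV {T : ℝ} {u v : ℝ × ℝ → Fin 2 → ℂ} {z : ℝ × ℝ}
    {A B : ℝ × ℝ →L[ℝ] (Fin 2 → ℂ)} (hA : HasFDerivAt u A (reflT T z)) (hB : HasFDerivAt v B z)
    (i j : Fin 2) :
    ∃ L : ℝ × ℝ →L[ℝ] ℂ, HasFDerivAt (prodUV T u v i j) L z ∧ ∀ a b : ℝ,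
      L (a, b) = u (reflT T z) i * (starRingEnd ℂ) (B (a, b) j)
        + A (a, -b) i * (starRingEnd ℂ) (v z j) := by
  have h1 := hasFDerivAt_pi'.1 (hA.comp z (hasFDerivAt_reflT T z)) i
  have h2 := (Complex.conjCLE.toContinuousLinearMap.hasFDerivAt).comp z (hasFDerivAt_pi'.1 hB j)
  refine ⟨_, h1.mul h2, fun a b => ?_⟩
  simp [mul_comm]

lemma Dext_mem_nhds {T : ℝ} {z : ℝ × ℝ} (h1 : 0 < z.1) (h2 : z.1 < T) (h3 : 0 < z.2)
    (h4 : z.2 < 2 * T - z.1) : Dext T ∈ nhds z := by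
  have n1 : ∀ᶠ w : ℝ × ℝ in nhds z, 0 < w.1 := continuous_fst.continuousAt.eventually (lt_mem_nhds h1)
  have n2 : ∀ᶠ w : ℝ × ℝ in nhds z, w.1 < T := continuous_fst.continuousAt.eventually (gt_mem_nhds h2)
  have n3 : ∀ᶠ w : ℝ × ℝ in nhds z, 0 < w.2 := continuous_snd.continuousAt.eventually (lt_mem_nhds h3)
  have n4 : ∀ᶠ w : ℝ × ℝ in nhds z, w.2 < 2 * T - w.1 :=
    (isOpen_lt continuous_snd (by fun_prop)).mem_nhds h4
  filter_upwards [n1, n2, n3, n4] with w w1 w2 w3 w4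
  exact ⟨w1.le, w2.le, w3.le, w4.le⟩

/-- The conservation law `∂ₓ(u₂ v̄₁ - u₁ v̄₂) - i ∂ₜ(u₁ v̄₁ + u₂ v̄₂) = 0` in the open square, with
`u` evaluated at `(x, 2T - t)` and `v` at `(x, t)`. -/
lemma exists_hasFDerivAt_conservation {T : ℝ} {p q : ℝ → ℝ} {u v : ℝ × ℝ → Fin 2 → ℂ}
    (hu : ContDiffOn ℝ 1 u (Dext T)) (hueq : DiracOn p q (Dext T) u)
    (hv : ContDiffOn ℝ 1 v (Sq T)) (hveq : DiracDualOn p q (Sq T) v)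
    (hv0 : ∀ z ∈ Sq T, z.2 ≤ z.1 → v z = 0) {z : ℝ × ℝ}
    (hz : z ∈ Ioo (0 : ℝ) T ×ˢ Ioo (0 : ℝ) T) :
    ∃ L : (ℝ × ℝ →L[ℝ] ℂ) × (ℝ × ℝ →L[ℝ] ℂ),
      HasFDerivAt (fun z => prodUV T u v 1 0 z - prodUV T u v 0 1 z) L.1 z ∧
      HasFDerivAt (fun z => -Complex.I * (prodUV T u v 0 0 z + prodUV T u v 1 1 z)) L.2 z ∧
      L.1 (1, 0) + L.2 (0, 1) = 0 := by
  have hS : Sq T ∈ nhds z := Filter.mem_of_superset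
    ((isOpen_Ioo.prod isOpen_Ioo).mem_nhds hz) (prod_mono Ioo_subset_Icc_self Ioo_subset_Icc_self)
  rcases le_or_gt z.2 z.1 with hle | hlt
  · have H := fun i j => hasFDerivAt_prodUV_zero hu.continuousOn
      (hv.differentiableOn one_ne_zero) hv0 i j hS hle
    exact ⟨(_, _), (H 1 0).sub (H 0 1), ((H 0 0).add (H 1 1)).const_mul _, by simp⟩
  · obtain ⟨⟨z1, z2⟩, z3, z4⟩ := hz
    have hD : Dext T ∈ nhds (reflT T z) :=
      Dext_mem_nhds z1 z2 (by simp only [reflT]; linarith) (by simp only [reflT]; linarith)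
    have hA := ((hu.differentiableOn one_ne_zero).differentiableAt hD).hasFDerivAt
    have hB := ((hv.differentiableOn one_ne_zero).differentiableAt hS).hasFDerivAt
    have eu := hueq _ (mem_of_mem_nhds hD)
    have ev := hveq _ (mem_of_mem_nhds hS)
    rw [fderivWithin_of_mem_nhds hD] at eu
    rw [fderivWithin_of_mem_nhds hS] at ev
    set A := fderiv ℝ u (reflT T z)
    set B := fderiv ℝ v z
    have H := fun i j => hasFDerivAt_prodUV hA hB i j
    choose L hL hLe using H
    refine ⟨(_, _), (hL 1 0).sub (hL 0 1), ((hL 0 0).add (hL 1 1)).const_mul _, ?_⟩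
    have hneg : A (0, -1) = -A (0, 1) := by rw [← map_neg]; simp
    have eu0 := congrFun eu 0
    have eu1 := congrFun eu 1
    have ev0 := congrArg (starRingEnd ℂ) (congrFun ev 0)
    have ev1 := congrArg (starRingEnd ℂ) (congrFun ev 1)
    simp [Jmat, Vmat, Matrix.vecHead, Matrix.vecTail] at eu0 eu1 ev0 ev1
    simp [hLe, hneg]
    have hr : (reflT T z).1 = z.1 := rfl
    rw [hr] at eu0 eu1
    linear_combination (starRingEnd ℂ (v z 0)) * eu0 + (starRingEnd ℂ (v z 1)) * eu1
      + u (reflT T z) 0 * ev0 + u (reflT T z) 1 * ev1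

/-- The off-diagonal block identity: for a solution `u` of the extended
problem with smooth control supported in `(0,T)` and a solution `v` of the dual problem,
`∫₀^T u(x,T)·conj(v(x,T)) dx = i ∫₀^T u₂(0,2T-η) conj(v₁(0,η)) dη`. -/
theorem stmt7 (T : ℝ) (hT : 0 < T) (p q : ℝ → ℝ)
    (hp : ContinuousOn p (Icc 0 T)) (hq : ContinuousOn q (Icc 0 T))
    (f₀ : ℝ → ℂ) (hf₀ : ContDiff ℝ (⊤ : ℕ∞) f₀)
    (hsupp : Function.support f₀ ⊆ Ioo 0 T)
    (u : ℝ × ℝ → Fin 2 → ℂ)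
    (hu : ContDiffOn ℝ 1 u (Dext T))
    (hueq : DiracOn p q (Dext T) u)
    (hut : ∀ z ∈ Dext T, z.2 < z.1 → u z = 0)
    (hub : ∀ t ∈ Icc (0 : ℝ) (2 * T), u (0, t) 0 = f₀ t)
    (v : ℝ × ℝ → Fin 2 → ℂ)
    (hv : ContDiffOn ℝ 1 v (Sq T))
    (hveq : DiracDualOn p q (Sq T) v)
    (hvt : ∀ z ∈ Sq T, z.2 < z.1 → v z = 0) :
    (∫ x in (0 : ℝ)..T,
        (u (x, T) 0 * (starRingEnd ℂ) (v (x, T) 0) +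
          u (x, T) 1 * (starRingEnd ℂ) (v (x, T) 1)))
      = Complex.I *
        ∫ η in (0 : ℝ)..T, u (0, 2 * T - η) 1 * (starRingEnd ℂ) (v (0, η) 0) := by
  have hv0 : ∀ z ∈ Sq T, z.2 ≤ z.1 → v z = 0 := fun z hz h =>
    v_eq_zero hT hv.continuousOn hvt hz h
  have hcont := continuousOn_prodUV hu.continuousOn hv.continuousOn hv0
  have hex := fun z (hz : z ∈ Ioo (0 : ℝ) T ×ˢ Ioo (0 : ℝ) T) =>
    exists_hasFDerivAt_conservation hu hueq hv hveq hv0 hz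
  -- a choice of derivatives with identically zero divergence: zero outside the open square
  have hex' : ∀ z : ℝ × ℝ, ∃ L : (ℝ × ℝ →L[ℝ] ℂ) × (ℝ × ℝ →L[ℝ] ℂ),
      (z ∈ Ioo (0 : ℝ) T ×ˢ Ioo (0 : ℝ) T →
        HasFDerivAt (fun z => prodUV T u v 1 0 z - prodUV T u v 0 1 z) L.1 z ∧
        HasFDerivAt (fun z => -Complex.I * (prodUV T u v 0 0 z + prodUV T u v 1 1 z)) L.2 z) ∧
      L.1 (1, 0) + L.2 (0, 1) = 0 := by
    intro z
    by_cases hz : z ∈ Ioo (0 : ℝ) T ×ˢ Ioo (0 : ℝ) T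
    · obtain ⟨L, h1, h2, h3⟩ := hex z hz
      exact ⟨L, fun _ => ⟨h1, h2⟩, h3⟩
    · exact ⟨0, fun h => absurd h hz, by simp⟩
  choose L hL hL0 using hex'
  have key := integral2_divergence_prod_of_hasFDerivAt_off_countable
    (fun z => prodUV T u v 1 0 z - prodUV T u v 0 1 z)
    (fun z => -Complex.I * (prodUV T u v 0 0 z + prodUV T u v 1 1 z))
    (fun z => (L z).1) (fun z => (L z).2) 0 0 T T ∅ countable_empty
    (by rw [uIcc_of_le hT.le]; exact (hcont 1 0).sub (hcont 0 1))
    (by rw [uIcc_of_le hT.le]; exact continuousOn_const.mul ((hcont 0 0).add (hcont 1 1)))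
    (fun z hz => (hL z (by simpa [min_eq_left hT.le, max_eq_right hT.le] using hz)).1)
    (fun z hz => (hL z (by simpa [min_eq_left hT.le, max_eq_right hT.le] using hz)).2)
    (by simp only [hL0]; exact integrableOn_zero)
  simp only [hL0, intervalIntegral.integral_zero] at key
  have hm : ∀ s ∈ uIcc 0 T, 0 ≤ s ∧ s ≤ T := fun s hs => by rwa [uIcc_of_le hT.le] at hs
  have hvT : ∀ s ∈ uIcc 0 T, v (T, s) = 0 := fun s hs =>
    hv0 _ ⟨⟨hT.le, le_rfl⟩, hm s hs⟩ (hm s hs).2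
  have hvB : ∀ s ∈ uIcc 0 T, v (s, 0) = 0 := fun s hs =>
    hv0 _ ⟨hm s hs, ⟨le_rfl, hT.le⟩⟩ (hm s hs).1
  have hu0 : ∀ s ∈ uIcc 0 T, u (0, 2 * T - s) 0 = 0 := fun s hs => by
    obtain ⟨h1, h2⟩ := hm s hs
    rw [hub _ ⟨by linarith, by linarith⟩]
    by_contra hne
    linarith [(hsupp hne).2]
  have eTop : ∫ x in (0 : ℝ)..T, -Complex.I *
      (prodUV T u v 0 0 (x, T) + prodUV T u v 1 1 (x, T)) = -Complex.I * ∫ x in (0 : ℝ)..T,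
        (u (x, T) 0 * (starRingEnd ℂ) (v (x, T) 0) +
          u (x, T) 1 * (starRingEnd ℂ) (v (x, T) 1)) := by
    have e : 2 * T - T = T := by ring
    simp only [prodUV, reflT, e]
    exact intervalIntegral.integral_const_mul _ _
  have eBot : ∫ x in (0 : ℝ)..T, -Complex.I *
      (prodUV T u v 0 0 (x, 0) + prodUV T u v 1 1 (x, 0)) = 0 := by
    rw [intervalIntegral.integral_congr (g := fun _ => (0 : ℂ))
      (fun s hs => by simp [prodUV, hvB s hs])]
    simp
  have eRight : ∫ η in (0 : ℝ)..T, (prodUV T u v 1 0 (T, η) - prodUV T u v 0 1 (T, η)) = 0 := by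
    rw [intervalIntegral.integral_congr (g := fun _ => (0 : ℂ))
      (fun s hs => by simp [prodUV, hvT s hs])]
    simp
  have eLeft : ∫ η in (0 : ℝ)..T, (prodUV T u v 1 0 (0, η) - prodUV T u v 0 1 (0, η)) =
      ∫ η in (0 : ℝ)..T, u (0, 2 * T - η) 1 * (starRingEnd ℂ) (v (0, η) 0) :=
    intervalIntegral.integral_congr (fun s hs => by simp [prodUV, reflT, hu0 s hs])
  rw [eTop, eBot, eRight, eLeft] at key
  linear_combination Complex.I * (-key) + (∫ x in (0 : ℝ)..T,
        (u (x, T) 0 * (starRingEnd ℂ) (v (x, T) 0) +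
          u (x, T) 1 * (starRingEnd ℂ) (v (x, T) 1))) * Complex.I_sq
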